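/- Assume X* ∈ ℝ^{n×n} is symmetric positive semidefinite, satisfies the discounted ARE X* = Q + γA'X*A − γ²A'X*B(R + γB'X*B)⁻¹B'X*A, and the gain F* := −γ(R + γB'X*B)⁻¹B'X*A satisfies ρ(A + BF*) < 1. Define P* := [[Q + γA'X*A, γA'X*B], [γB'X*A, R + γB'X*B]]. Then: (i) γ (A_{F*})' P* A_{F*} + Λ = P*, and P* is the unique symmetric matrix satisfying this equation; (ii) P* is positive semidefinite; (iii) the lower-right block P*22 = R + γB'X*B is positive definite; (iv) F* = −(P*22)⁻¹ (P*12)', where P*12 = γA'X*B. -/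

import Mathlib

open Matrix MeasureTheory Filter
open scoped ENNReal

/-- Spectral radius of a real square matrix: the maximum modulus of its complex
eigenvalues, expressed via the spectral radius of its complexification. -/
noncomputable def specRad {ι : Type*} [Fintype ι] [DecidableEq ι]
    (M : Matrix ι ι ℝ) : ℝ≥0∞ :=
  spectralRadius ℂ (M.map Complex.ofReal)

/-- The block matrix `A_F = [[A, B], [FA, FB]]`. -/
noncomputable def blockAF {n m : ℕ} (A : Matrix (Fin n) (Fin n) ℝ)
    (B : Matrix (Fin n) (Fin m) ℝ) (F : Matrix (Fin m) (Fin n) ℝ) :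
    Matrix (Fin n ⊕ Fin m) (Fin n ⊕ Fin m) ℝ :=
  Matrix.fromBlocks A B (F * A) (F * B)

/-- The block column matrix `F̄ = [I_n; F]`. -/
noncomputable def extendF {n m : ℕ} (F : Matrix (Fin m) (Fin n) ℝ) :
    Matrix (Fin n ⊕ Fin m) (Fin n) ℝ :=
  Matrix.fromRows (1 : Matrix (Fin n) (Fin n) ℝ) F

/-- The block diagonal matrix `Λ = diag(Q, R)`. -/
noncomputable def blockLam {n m : ℕ} (Q : Matrix (Fin n) (Fin n) ℝ)
    (R : Matrix (Fin m) (Fin m) ℝ) :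
    Matrix (Fin n ⊕ Fin m) (Fin n ⊕ Fin m) ℝ :=
  Matrix.fromBlocks Q 0 0 R

/-- The LQR gain `F = -γ (R + γ B' X B)⁻¹ B' X A` associated with `X`. -/
noncomputable def gainF {n m : ℕ} (A : Matrix (Fin n) (Fin n) ℝ)
    (B : Matrix (Fin n) (Fin m) ℝ) (R : Matrix (Fin m) (Fin m) ℝ)
    (γ : ℝ) (X : Matrix (Fin n) (Fin n) ℝ) : Matrix (Fin m) (Fin n) ℝ :=
  -(γ • ((R + γ • (Bᵀ * X * B))⁻¹ * (Bᵀ * X * A)))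

/-- `P = [[Q + γA'XA, γA'XB], [γB'XA, R + γB'XB]]`. -/
noncomputable def Pmat {n m : ℕ} (A : Matrix (Fin n) (Fin n) ℝ)
    (B : Matrix (Fin n) (Fin m) ℝ) (Q : Matrix (Fin n) (Fin n) ℝ)
    (R : Matrix (Fin m) (Fin m) ℝ) (γ : ℝ) (X : Matrix (Fin n) (Fin n) ℝ) :
    Matrix (Fin n ⊕ Fin m) (Fin n ⊕ Fin m) ℝ :=
  Matrix.fromBlocks (Q + γ • (Aᵀ * X * A)) (γ • (Aᵀ * X * B))
    (γ • (Bᵀ * X * A)) (R + γ • (Bᵀ * X * B))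

/-- `X` solves the discounted algebraic Riccati equation
`X = Q + γA'XA − γ²A'XB(R + γB'XB)⁻¹B'XA`. -/
def IsAREsol {n m : ℕ} (A : Matrix (Fin n) (Fin n) ℝ)
    (B : Matrix (Fin n) (Fin m) ℝ) (Q : Matrix (Fin n) (Fin n) ℝ)
    (R : Matrix (Fin m) (Fin m) ℝ) (γ : ℝ) (X : Matrix (Fin n) (Fin n) ℝ) : Prop :=
  X = Q + γ • (Aᵀ * X * A)
    - (γ ^ 2) • (Aᵀ * X * B * (R + γ • (Bᵀ * X * B))⁻¹ * (Bᵀ * X * A))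

/-!
The gain is `F* = -P₂₂⁻¹ P₂₁`, so with `E = [I; F*]` the product `Eᵀ P* E` is the Schur complement
of `P₂₂` in `P*`, and the Riccati equation says exactly that this Schur complement is `X*`. Since
`A_F = E [A B]` and `P* = γ [A B]ᵀ X* [A B] + Λ`, the Lyapunov equation for `P*` follows, and `P*`
is positive semidefinite because `P₂₂` is positive definite and its Schur complement `X*` is
positive semidefinite. For uniqueness, `A_F = E [A B]` and `A + B F* = [A B] E` have the same
spectral radius, and by Gelfand's formula a solution of `Y = γ Kᵀ Y K` with `γ ρ(K)² < 1` satisfies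
`‖Y‖ ≤ γᵏ ‖Kᵏ‖² ‖Y‖` with `γᵏ ‖Kᵏ‖² < 1` for some `k`.
-/

section Lyapunov

theorem eq_pow_smul_star_pow_mul_mul_pow {R 𝒜 : Type*} [Monoid R] [Monoid 𝒜] [StarMul 𝒜]
    [MulAction R 𝒜] [SMulCommClass R 𝒜 𝒜] [IsScalarTower R 𝒜 𝒜] {c : R} {a y : 𝒜}
    (hy : y = c • (star a * y * a)) (k : ℕ) : y = c ^ k • (star (a ^ k) * y * a ^ k) := by
  induction k with
  | zero => simp
  | succ k ih =>
    calc y = c ^ k • (star (a ^ k) * (c • (star a * y * a)) * a ^ k) := by rwa [← hy]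
      _ = c ^ (k + 1) • (star (a ^ (k + 1)) * y * a ^ (k + 1)) := by
        simp only [pow_succ c, pow_succ' a, star_mul, mul_smul_comm, smul_mul_assoc, smul_smul,
          mul_assoc]

variable {𝒜 : Type*} [NormedRing 𝒜] [NormedAlgebra ℂ 𝒜] [CompleteSpace 𝒜]

theorem exists_enorm_pow_mul_enorm_pow_sq_lt_one {c : ℂ} {a : 𝒜}
    (h : ‖c‖ₑ * spectralRadius ℂ a ^ 2 < 1) : ∃ k : ℕ, ‖c‖ₑ ^ k * ‖a ^ k‖ₑ ^ 2 < 1 := by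
  have gelfand := spectrum.pow_nnnorm_pow_one_div_tendsto_nhds_spectralRadius a
  have tendsto_mul_sq := ENNReal.Tendsto.const_mul (ENNReal.Tendsto.pow (n := 2) gelfand)
    (.inr (enorm_ne_top (x := c)))
  obtain ⟨k, hk, k_pos⟩ :=
    ((tendsto_mul_sq.eventually_lt_const h).and (eventually_gt_atTop 0)).exists
  have root_pow : ((‖a ^ k‖₊ : ℝ≥0∞) ^ (1 / k : ℝ)) ^ k = ‖a ^ k‖ₑ := by
    rw [one_div, ENNReal.rpow_inv_natCast_pow k_pos.ne', enorm_eq_nnnorm]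
  refine ⟨k, ?_⟩
  calc ‖c‖ₑ ^ k * ‖a ^ k‖ₑ ^ 2 = (‖c‖ₑ * ((‖a ^ k‖₊ : ℝ≥0∞) ^ (1 / k : ℝ)) ^ 2) ^ k := by
        rw [← root_pow, mul_pow, pow_right_comm]
    _ < 1 := pow_lt_one₀ zero_le hk k_pos.ne'

variable [StarRing 𝒜] [NormedStarGroup 𝒜]

theorem eq_zero_of_eq_smul_star_mul_mul {c : ℂ} {a y : 𝒜}
    (h : ‖c‖ₑ * spectralRadius ℂ a ^ 2 < 1) (hy : y = c • (star a * y * a)) : y = 0 := by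
  obtain ⟨k, hk⟩ := exists_enorm_pow_mul_enorm_pow_sq_lt_one h
  have contraction : ‖c‖ ^ k * ‖a ^ k‖ ^ 2 < 1 := by
    simpa [← ofReal_norm, ← ENNReal.ofReal_pow, ← ENNReal.ofReal_mul] using hk
  have norm_le : ‖y‖ ≤ ‖c‖ ^ k * ‖a ^ k‖ ^ 2 * ‖y‖ :=
    calc ‖y‖ = ‖c ^ k • (star (a ^ k) * y * a ^ k)‖ :=
          congrArg norm (eq_pow_smul_star_pow_mul_mul_pow hy k)
      _ ≤ ‖c‖ ^ k * (‖star (a ^ k)‖ * ‖y‖ * ‖a ^ k‖) := by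
        rw [norm_smul, norm_pow]
        gcongr
        exact norm_mul₃_le
      _ = ‖c‖ ^ k * ‖a ^ k‖ ^ 2 * ‖y‖ := by
        rw [norm_star]
        ring
  by_contra y_ne_zero
  exact (mul_lt_of_lt_one_left (norm_pos_iff.mpr y_ne_zero) contraction).not_ge norm_le

end Lyapunov

section SpectralRadius

theorem map_ofReal_mul {l m n : Type*} [Fintype m] (M : Matrix l m ℝ) (N : Matrix m n ℝ) :
    (M * N).map Complex.ofReal = M.map Complex.ofReal * N.map Complex.ofReal :=
  Matrix.map_mul (f := Complex.ofRealHom)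

variable {ι κ : Type*} [Fintype ι] [DecidableEq ι] [Fintype κ] [DecidableEq κ]

theorem mem_spectrum_mul_comm {𝕜 : Type*} [Field 𝕜] (M : Matrix ι κ 𝕜) (N : Matrix κ ι 𝕜) {μ : 𝕜}
    (hμ : μ ≠ 0) : μ ∈ spectrum 𝕜 (M * N) ↔ μ ∈ spectrum 𝕜 (N * M) := by
  have eval_eq : μ ^ Fintype.card κ * (M * N).charpoly.eval μ
      = μ ^ Fintype.card ι * (N * M).charpoly.eval μ := by
    simpa using congrArg (Polynomial.eval μ) (charpoly_mul_comm' M N)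
  have eval_eq_zero_iff := congrArg (· = 0) eval_eq
  simpa only [mem_spectrum_iff_isRoot_charpoly, Polynomial.IsRoot.def, mul_eq_zero,
    pow_eq_zero_iff', hμ, false_and, false_or, eq_iff_iff] using eval_eq_zero_iff

theorem spectralRadius_mul_comm {𝕜 : Type*} [NormedField 𝕜] (M : Matrix ι κ 𝕜)
    (N : Matrix κ ι 𝕜) : spectralRadius 𝕜 (M * N) = spectralRadius 𝕜 (N * M) := by
  refine iSup_congr fun μ => ?_
  obtain rfl | hμ := eq_or_ne μ 0
  · simp
  · rw [mem_spectrum_mul_comm M N hμ]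

theorem specRad_mul_comm (M : Matrix ι κ ℝ) (N : Matrix κ ι ℝ) :
    specRad (M * N) = specRad (N * M) := by
  simp only [specRad, map_ofReal_mul, spectralRadius_mul_comm (M.map _)]

open scoped Matrix.Norms.L2Operator in
theorem eq_zero_of_eq_smul_transpose_mul_mul {K Y : Matrix ι ι ℝ} {γ : ℝ}
    (h : ‖γ‖ₑ * specRad K ^ 2 < 1) (hY : Y = γ • (Kᵀ * Y * K)) : Y = 0 := by
  have enorm_ofReal : ‖(γ : ℂ)‖ₑ = ‖γ‖ₑ := by simp [← ofReal_norm]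
  have star_map : star (K.map Complex.ofReal) = Kᵀ.map Complex.ofReal := by
    ext
    simp
  have complex_eq : Y.map Complex.ofReal = (γ : ℂ) •
      (star (K.map Complex.ofReal) * Y.map Complex.ofReal * K.map Complex.ofReal) := by
    rw [star_map, ← map_ofReal_mul, ← map_ofReal_mul,
      ← Matrix.map_smulₛₗ _ _ _ (Complex.ofReal_mul γ), ← hY]
  have map_eq_zero : Y.map Complex.ofReal = 0 :=
    eq_zero_of_eq_smul_star_mul_mul (enorm_ofReal ▸ h) complex_eq
  exact Matrix.map_injective Complex.ofReal_injective (by simpa using map_eq_zero)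

theorem eq_of_smul_transpose_mul_mul_add_eq {K L P P' : Matrix ι ι ℝ} {γ : ℝ}
    (h : ‖γ‖ₑ * specRad K ^ 2 < 1) (hP : γ • (Kᵀ * P * K) + L = P)
    (hP' : γ • (Kᵀ * P' * K) + L = P') : P = P' := by
  refine sub_eq_zero.mp (eq_zero_of_eq_smul_transpose_mul_mul h ?_)
  calc P - P' = (γ • (Kᵀ * P * K) + L) - (γ • (Kᵀ * P' * K) + L) := by rw [hP, hP']
    _ = γ • (Kᵀ * (P - P') * K) := by
      rw [add_sub_add_right_eq_sub, ← smul_sub, Matrix.mul_sub, Matrix.sub_mul]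

end SpectralRadius

theorem fromRows_transpose_mul_fromBlocks_mul_eq_schurComplement {ι κ α : Type*} [Fintype ι]
    [DecidableEq ι] [Fintype κ] [DecidableEq κ] [CommRing α] (A : Matrix ι ι α)
    (B : Matrix ι κ α) (C : Matrix κ ι α) {D : Matrix κ κ α} (hD : IsUnit D) :
    (fromRows (1 : Matrix ι ι α) (-(D⁻¹ * C)))ᵀ * fromBlocks A B C D
        * fromRows (1 : Matrix ι ι α) (-(D⁻¹ * C)) = A - B * D⁻¹ * C := by
  have det_unit : IsUnit D.det := (isUnit_iff_isUnit_det D).mp hD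
  have mul_eq : fromBlocks A B C D * fromRows (1 : Matrix ι ι α) (-(D⁻¹ * C))
      = fromRows (A - B * D⁻¹ * C) 0 := by
    rw [fromBlocks_mul_fromRows, Matrix.mul_neg, Matrix.mul_neg,
      mul_nonsing_inv_cancel_left _ _ det_unit, Matrix.mul_one, Matrix.mul_one, add_neg_cancel,
      ← sub_eq_add_neg, Matrix.mul_assoc]
  rw [Matrix.mul_assoc, mul_eq, transpose_fromRows, fromCols_mul_fromRows, transpose_one,
    Matrix.one_mul, Matrix.mul_zero, add_zero]

theorem transpose_smul_transpose_mul_mul {ι κ l α : Type*} [Fintype ι] [CommSemiring α]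
    {X : Matrix ι ι α} (hX : X.IsSymm) (A : Matrix ι κ α) (B : Matrix ι l α) (γ : α) :
    (γ • (Aᵀ * X * B))ᵀ = γ • (Bᵀ * X * A) := by
  rw [transpose_smul, transpose_mul, transpose_mul, transpose_transpose, hX.eq, Matrix.mul_assoc]

theorem posDef_add_smul_transpose_mul_mul {ι κ : Type*} [Fintype ι] [Finite κ]
    {R : Matrix κ κ ℝ} {X : Matrix ι ι ℝ} {γ : ℝ} (hR : R.PosDef) (hγ : 0 ≤ γ)
    (hX : X.PosSemidef) (B : Matrix ι κ ℝ) : (R + γ • (Bᵀ * X * B)).PosDef :=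
  hR.add_posSemidef ((hX.conjTranspose_mul_mul_same B).smul hγ)

section Riccati

variable {n m : ℕ} {A : Matrix (Fin n) (Fin n) ℝ} {B : Matrix (Fin n) (Fin m) ℝ}
  {Q : Matrix (Fin n) (Fin n) ℝ} {R : Matrix (Fin m) (Fin m) ℝ} {γ : ℝ}
  {X : Matrix (Fin n) (Fin n) ℝ}

variable (A B) in
theorem blockAF_eq_extendF_mul_fromCols (F : Matrix (Fin m) (Fin n) ℝ) :
    blockAF A B F = extendF F * fromCols A B := by
  rw [blockAF, extendF, fromRows_mul_fromCols, Matrix.one_mul, Matrix.one_mul]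

variable (A B) in
theorem specRad_blockAF (F : Matrix (Fin m) (Fin n) ℝ) :
    specRad (blockAF A B F) = specRad (A + B * F) := by
  rw [blockAF_eq_extendF_mul_fromCols, specRad_mul_comm, extendF, fromCols_mul_fromRows,
    Matrix.mul_one]

variable (A B Q R γ X) in
theorem Pmat_eq_smul_fromCols_add_blockLam :
    Pmat A B Q R γ X = γ • ((fromCols A B)ᵀ * X * fromCols A B) + blockLam Q R := by
  rw [Pmat, blockLam, transpose_fromCols, fromRows_mul, fromRows_mul_fromCols, fromBlocks_smul,
    fromBlocks_add, add_zero, add_zero, add_comm Q, add_comm R]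

variable (A B R γ X) in
theorem gainF_eq_neg_inv_mul :
    gainF A B R γ X = -((R + γ • (Bᵀ * X * B))⁻¹ * (γ • (Bᵀ * X * A))) := by
  rw [gainF, Matrix.mul_smul]

theorem isAREsol_iff_schurComplement_eq : IsAREsol A B Q R γ X ↔
    Q + γ • (Aᵀ * X * A)
      - γ • (Aᵀ * X * B) * (R + γ • (Bᵀ * X * B))⁻¹ * (γ • (Bᵀ * X * A)) = X := by
  rw [IsAREsol, eq_comm, Matrix.smul_mul, Matrix.smul_mul, Matrix.mul_smul, smul_smul, sq]

theorem extendF_transpose_mul_Pmat_mul_extendF (hS : IsUnit (R + γ • (Bᵀ * X * B)))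
    (hARE : IsAREsol A B Q R γ X) :
    (extendF (gainF A B R γ X))ᵀ * Pmat A B Q R γ X * extendF (gainF A B R γ X) = X := by
  rw [extendF, gainF_eq_neg_inv_mul, Pmat,
    fromRows_transpose_mul_fromBlocks_mul_eq_schurComplement _ _ _ hS]
  exact isAREsol_iff_schurComplement_eq.mp hARE

theorem smul_blockAF_transpose_mul_Pmat_mul_add (hS : IsUnit (R + γ • (Bᵀ * X * B)))
    (hARE : IsAREsol A B Q R γ X) :
    γ • ((blockAF A B (gainF A B R γ X))ᵀ * Pmat A B Q R γ X * blockAF A B (gainF A B R γ X))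
      + blockLam Q R = Pmat A B Q R γ X := by
  set F := gainF A B R γ X with hF
  set G := fromCols A B
  have congr_eq : (blockAF A B F)ᵀ * Pmat A B Q R γ X * blockAF A B F = Gᵀ * X * G :=
    calc _ = Gᵀ * ((extendF F)ᵀ * Pmat A B Q R γ X * extendF F) * G := by
          simp only [blockAF_eq_extendF_mul_fromCols, transpose_mul, Matrix.mul_assoc, G]
      _ = Gᵀ * X * G := by rw [hF, extendF_transpose_mul_Pmat_mul_extendF hS hARE]
  rw [congr_eq, ← Pmat_eq_smul_fromCols_add_blockLam]

theorem gainF_eq_neg_toBlocks₂₂_inv_mul (hX : X.IsSymm) : gainF A B R γ X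
    = -((Pmat A B Q R γ X).toBlocks₂₂⁻¹ * (Pmat A B Q R γ X).toBlocks₁₂ᵀ) := by
  rw [Pmat, toBlocks_fromBlocks₂₂, toBlocks_fromBlocks₁₂,
    transpose_smul_transpose_mul_mul hX, gainF_eq_neg_inv_mul]

theorem Pmat_posSemidef (hX : X.PosSemidef) (hS : (R + γ • (Bᵀ * X * B)).PosDef)
    (hARE : IsAREsol A B Q R γ X) : (Pmat A B Q R γ X).PosSemidef := by
  have off_diag : (γ • (Aᵀ * X * B))ᴴ = γ • (Bᵀ * X * A) :=
    transpose_smul_transpose_mul_mul (isHermitian_iff_isSymm.mp hX.isHermitian) A B γ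
  have := hS.isUnit.invertible
  rw [Pmat, ← off_diag, PosDef.fromBlocks₂₂ _ _ hS, off_diag,
    isAREsol_iff_schurComplement_eq.mp hARE]
  exact hX

theorem Pstar_properties_general (hR : R.PosDef) (hγ : 0 ≤ γ) (hX : X.PosSemidef)
    (hARE : IsAREsol A B Q R γ X)
    (hstab : ENNReal.ofReal γ * specRad (A + B * gainF A B R γ X) ^ 2 < 1) :
    (γ • ((blockAF A B (gainF A B R γ X))ᵀ * Pmat A B Q R γ X * blockAF A B (gainF A B R γ X))
          + blockLam Q R = Pmat A B Q R γ X
      ∧ ∀ P : Matrix (Fin n ⊕ Fin m) (Fin n ⊕ Fin m) ℝ,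
          γ • ((blockAF A B (gainF A B R γ X))ᵀ * P * blockAF A B (gainF A B R γ X))
            + blockLam Q R = P → P = Pmat A B Q R γ X)
    ∧ (Pmat A B Q R γ X).PosSemidef
    ∧ (R + γ • (Bᵀ * X * B)).PosDef
    ∧ gainF A B R γ X
        = -((Pmat A B Q R γ X).toBlocks₂₂⁻¹ * (Pmat A B Q R γ X).toBlocks₁₂ᵀ) := by
  have hS := posDef_add_smul_transpose_mul_mul hR hγ hX B
  have lyapunov := smul_blockAF_transpose_mul_Pmat_mul_add hS.isUnit hARE
  rw [← specRad_blockAF, ← Real.enorm_of_nonneg hγ] at hstab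
  exact ⟨⟨lyapunov, fun P hP => eq_of_smul_transpose_mul_mul_add_eq hstab hP lyapunov⟩,
    Pmat_posSemidef hX hS hARE, hS,
    gainF_eq_neg_toBlocks₂₂_inv_mul (isHermitian_iff_isSymm.mp hX.isHermitian)⟩

end Riccati

theorem Pstar_properties (n m : ℕ) (hn : 0 < n) (hm : 0 < m)
    (A : Matrix (Fin n) (Fin n) ℝ) (B : Matrix (Fin n) (Fin m) ℝ)
    (Q : Matrix (Fin n) (Fin n) ℝ) (R : Matrix (Fin m) (Fin m) ℝ)
    (hQ : Q.PosSemidef) (hR : R.PosDef)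
    (γ : ℝ) (hγ0 : 0 < γ) (hγ1 : γ < 1)
    (Xstar : Matrix (Fin n) (Fin n) ℝ) (hXstar : Xstar.PosSemidef)
    (hARE : IsAREsol A B Q R γ Xstar)
    (hstab : specRad (A + B * gainF A B R γ Xstar) < 1) :
    (γ • ((blockAF A B (gainF A B R γ Xstar))ᵀ * Pmat A B Q R γ Xstar
          * blockAF A B (gainF A B R γ Xstar)) + blockLam Q R = Pmat A B Q R γ Xstar
      ∧ ∀ P : Matrix (Fin n ⊕ Fin m) (Fin n ⊕ Fin m) ℝ, P.IsSymm →
          γ • ((blockAF A B (gainF A B R γ Xstar))ᵀ * P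
              * blockAF A B (gainF A B R γ Xstar)) + blockLam Q R = P →
          P = Pmat A B Q R γ Xstar)
    ∧ (Pmat A B Q R γ Xstar).PosSemidef
    ∧ (R + γ • (Bᵀ * Xstar * B)).PosDef
    ∧ gainF A B R γ Xstar
        = -(((Pmat A B Q R γ Xstar).toBlocks₂₂)⁻¹ * ((Pmat A B Q R γ Xstar).toBlocks₁₂)ᵀ) := by
  have hstab_sq : ENNReal.ofReal γ * specRad (A + B * gainF A B R γ Xstar) ^ 2 < 1 :=
    mul_lt_one_of_nonneg_of_lt_one_left zero_le (ENNReal.ofReal_lt_one.mpr hγ1)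
      (pow_le_one₀ zero_le hstab.le)
  exact (Pstar_properties_general hR hγ0.le hXstar hARE hstab_sq).imp_left
    (And.imp_right fun eq_Pmat P _ => eq_Pmat P)
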